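/- Let T > 0 and consider the consistency equation T²M³ + T(2−T)M|M| + (1−2T)M = 0 (i.e. with m₀ = 0). If T ≤ 1/2, its only real solution is M = 0. If T > 1/2, it has exactly three real solutions: 0, M₊ and −M₊, where M₊ is the unique positive root of T²M² + T(2−T)M + 1 − 2T = 0. -/

import Mathlib

/-!
The left-hand side of the consistency equation is `M * q |M|` with
`q t = T² t² + T (2 - T) t + (1 - 2 T)`, so its nonzero roots are `±t` for the positive roots `t`
of `q`. If `T ≤ 1/2`, no coefficient of `q` is negative and `q` is positive on `(0, ∞)`. If
`1/2 < T`, then `q 0 < 0` while the leading coefficient is positive; the product of the two roots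
of `q` is therefore negative, and exactly one of them is positive.
-/

section OddExtension

variable {R : Type*} [Ring R] [LinearOrder R] [IsStrictOrderedRing R] {f : R → R}

lemma setOf_mul_apply_abs_eq_zero_eq_singleton (hf : ∀ t, 0 < t → f t ≠ 0) :
    {x : R | x * f |x| = 0} = {0} := by
  ext x
  simp only [Set.mem_ofPred_eq, Set.mem_singleton_iff, mul_eq_zero, or_iff_left_iff_imp]
  intro hfx
  by_contra hx
  exact hf |x| (abs_pos.mpr hx) hfx

lemma setOf_mul_apply_abs_eq_zero_eq_triple {p : R} (hp : 0 < p) (hfp : f p = 0)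
    (huniq : ∀ t, 0 < t → f t = 0 → t = p) :
    {x : R | x * f |x| = 0} = {0, p, -p} := by
  ext x
  simp only [Set.mem_ofPred_eq, Set.mem_insert_iff, Set.mem_singleton_iff, mul_eq_zero]
  rcases eq_or_ne x 0 with rfl | hx
  · simp
  · have abs_root_iff : f |x| = 0 ↔ |x| = p :=
      ⟨huniq |x| (abs_pos.mpr hx), fun h ↦ h ▸ hfp⟩
    rw [abs_root_iff, abs_eq hp.le]

end OddExtension

section Quadratic

variable {R : Type*} [CommRing R] [LinearOrder R]

lemma cubic_abs_eq_mul_quadratic_abs (a b c x : R) :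
    a * x ^ 3 + b * x * |x| + c * x = x * (a * |x| ^ 2 + b * |x| + c) := by
  rw [sq_abs]
  ring

variable [IsStrictOrderedRing R] {a b c : R}

lemma quadratic_pos_of_pos (ha : 0 < a) (hb : 0 ≤ b) (hc : 0 ≤ c) {x : R} (hx : 0 < x) :
    0 < a * x ^ 2 + b * x + c := by
  positivity

lemma pos_root_quadratic_unique (ha : 0 ≤ a) (hc : c < 0) {x y : R} (hx : 0 < x) (hy : 0 < y)
    (hqx : a * x ^ 2 + b * x + c = 0) (hqy : a * y ^ 2 + b * y + c = 0) : x = y := by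
  -- Eliminating `b` between the two equations leaves a second factor that cannot vanish.
  have factored : (x - y) * (a * (x * y) - c) = 0 := by
    linear_combination y * hqx - x * hqy
  have second_factor_pos : 0 < a * (x * y) - c := by
    have := mul_nonneg ha (mul_pos hx hy).le
    linarith
  exact sub_eq_zero.mp ((mul_eq_zero.mp factored).resolve_right second_factor_pos.ne')

end Quadratic

lemma exists_pos_root_quadratic {a c : ℝ} (b : ℝ) (ha : 0 < a) (hc : c < 0) :
    ∃ x : ℝ, 0 < x ∧ a * x ^ 2 + b * x + c = 0 := by
  have sq_lt_discrim : b ^ 2 < discrim a b c := by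
    have := mul_neg_of_pos_of_neg ha hc
    rw [discrim]
    linarith
  have discrim_eq : discrim a b c = √(discrim a b c) * √(discrim a b c) :=
    (Real.mul_self_sqrt ((sq_nonneg b).trans sq_lt_discrim.le)).symm
  have lt_sqrt_discrim : b < √(discrim a b c) := Real.lt_sqrt_of_sq_lt sq_lt_discrim
  refine ⟨(-b + √(discrim a b c)) / (2 * a), div_pos (by linarith) (by positivity), ?_⟩
  rw [sq]
  exact (quadratic_eq_zero_iff ha.ne' discrim_eq _).mpr (Or.inl rfl)

/-- Let `T > 0` and consider `T²M³ + T(2−T)M|M| + (1−2T)M = 0`. If `T ≤ 1/2`,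
its only real solution is `M = 0`. If `T > 1/2`, it has exactly three real
solutions: `0`, `M₊` and `−M₊`, where `M₊` is the unique positive root of
`T²M² + T(2−T)M + 1 − 2T = 0`. -/
theorem stmt_4 (T : ℝ) (hT : 0 < T) :
    (T ≤ 1/2 →
      {M : ℝ | T^2 * M^3 + T*(2 - T) * M * |M| + (1 - 2*T) * M = 0} = {0}) ∧
    (1/2 < T → ∃ Mp : ℝ, 0 < Mp ∧
      T^2 * Mp^2 + T*(2 - T) * Mp + 1 - 2*T = 0 ∧
      (∀ M' : ℝ, 0 < M' → T^2 * M'^2 + T*(2 - T) * M' + 1 - 2*T = 0 → M' = Mp) ∧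
      {M : ℝ | T^2 * M^3 + T*(2 - T) * M * |M| + (1 - 2*T) * M = 0}
        = {0, Mp, -Mp}) := by
  simp only [cubic_abs_eq_mul_quadratic_abs, add_sub_assoc]
  constructor
  · intro hT_le
    have hb : 0 ≤ T * (2 - T) := mul_nonneg hT.le (by linarith)
    have hc : 0 ≤ 1 - 2 * T := by linarith
    exact setOf_mul_apply_abs_eq_zero_eq_singleton
      fun t ht ↦ (quadratic_pos_of_pos (pow_pos hT 2) hb hc ht).ne'
  · intro hT_gt
    have ha : 0 < T ^ 2 := pow_pos hT 2
    have hc : 1 - 2 * T < 0 := by linarith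
    obtain ⟨Mp, hMp, hroot⟩ := exists_pos_root_quadratic (T * (2 - T)) ha hc
    have huniq (t : ℝ) (ht : 0 < t) (hqt : T ^ 2 * t ^ 2 + T * (2 - T) * t + (1 - 2 * T) = 0) :
        t = Mp :=
      pos_root_quadratic_unique ha.le hc ht hMp hqt hroot
    exact ⟨Mp, hMp, hroot, huniq, setOf_mul_apply_abs_eq_zero_eq_triple hMp hroot huniq⟩
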